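/- Suppose there exists i ∈ {1,…,r} such that every square-free monomial of degree d+1 that is a multiple of f_i belongs to J. Then depth_S (I/J) = d. -/

import Mathlib

open MvPolynomial

/-- The square-free monomial `∏ i ∈ T, X i` associated to a set `T` of variables. -/
noncomputable def sqMon (K : Type) [Field K] {n : ℕ} (T : Finset (Fin n)) :
    MvPolynomial (Fin n) K :=
  ∏ i ∈ T, X i

/-- `GenBySqMonOfDeg K P I` means: `I` is generated by square-free monomials whose
degrees satisfy the predicate `P`. -/
def GenBySqMonOfDeg (K : Type) [Field K] {n : ℕ} (P : ℕ → Prop)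
    (I : Ideal (MvPolynomial (Fin n) K)) : Prop :=
  ∃ G : Set (Finset (Fin n)), (∀ T ∈ G, P T.card) ∧ I = Ideal.span (sqMon K '' G)

/-- `rho K d I` : the number of square-free monomials of degree `d` belonging to `I`. -/
noncomputable def rho (K : Type) [Field K] {n : ℕ} (d : ℕ)
    (I : Ideal (MvPolynomial (Fin n) K)) : ℕ :=
  Set.ncard {T : Finset (Fin n) | T.card = d ∧ sqMon K T ∈ I}

/-- The maximal graded ideal `(x_1, …, x_n)` of `K[x_1, …, x_n]`. -/
noncomputable def maxGraded (K : Type) [Field K] (n : ℕ) :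
    Ideal (MvPolynomial (Fin n) K) :=
  Ideal.span (Set.range (X : Fin n → MvPolynomial (Fin n) K))

/-- The depth of the module `M` with respect to the ideal `I` : the supremum of the
lengths of `M`-regular sequences consisting of elements of `I`. -/
noncomputable def moduleDepth {R : Type} [CommRing R] (I : Ideal R)
    (M : Type) [AddCommGroup M] [Module R M] : ℕ∞ :=
  sSup {k : ℕ∞ | ∃ rs : List R, k = (rs.length : ℕ∞) ∧ (∀ r ∈ rs, r ∈ I) ∧
    RingTheory.Sequence.IsRegular M rs}

/-- The `R`-module `I/J` (more precisely `I/(I ∩ J)`, which is `I/J` when `J ≤ I`). -/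
noncomputable abbrev idealQuot {R : Type} [CommRing R] (I J : Ideal R) : Type :=
  ↥I ⧸ (Submodule.comap I.subtype (J : Submodule R R))


open scoped Pointwise in
open RingTheory.Sequence in
theorem aux_step {R : Type} [CommRing R] [IsNoetherianRing R] (m : Ideal R) [m.IsPrime]
    (M : Type) [AddCommGroup M] [Module R M] [Module.Finite R M] (P : Ideal R)
    (hP : IsAssociatedPrime P M) (hPm : P ≤ m) (x : R) (hxm : x ∈ m) (hx : IsSMulRegular M x) :
    ∃ Q : Ideal R, IsAssociatedPrime Q (QuotSMulTop x M) ∧ Q ≤ m ∧ P < Q := by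
  have hPp := hP.1
  obtain ⟨-, u, hu⟩ := isAssociatedPrime_iff.1 hP
  have hu' : ∀ r, r ∈ P ↔ r • u = 0 := by
    intro r; rw [hu]; simp [Submodule.mem_colon_singleton]
  let N : Submodule R M := Submodule.torsionBySet R M (P : Set R)
  have hN : ∀ v, v ∈ N ↔ ∀ p ∈ P, p • v = 0 := by
    intro v; simp [N, Submodule.mem_torsionBySet_iff]
  have huN : u ∈ N := (hN u).2 fun p hp => (hu' p).1 hp
  have hann : Module.annihilator R N ≤ P := by
    intro r hr
    rw [Module.mem_annihilator] at hr
    have := hr ⟨u, huN⟩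
    rw [hu']
    simpa using congrArg Subtype.val this
  have hinj : Function.Injective (QuotSMulTop.map x N.subtype) := by
    rw [injective_iff_map_eq_zero]
    intro a
    induction a using Submodule.Quotient.induction_on with
    | H a =>
    intro h
    rw [QuotSMulTop.map_apply_mk, Submodule.Quotient.mk_eq_zero,
      Submodule.mem_smul_pointwise_iff_exists] at h
    obtain ⟨b, -, hb⟩ := h
    rw [Submodule.Quotient.mk_eq_zero, Submodule.mem_smul_pointwise_iff_exists]
    have hbN : b ∈ N := by
      rw [hN]
      intro p hp
      have h1 := (hN _).1 a.2 p hp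
      apply hx
      simp only [smul_zero]
      rw [smul_comm, hb]
      exact h1
    exact ⟨⟨b, hbN⟩, trivial, Subtype.ext hb⟩
  have hsupp : (⟨m, inferInstance⟩ : PrimeSpectrum R) ∈ Module.support R (QuotSMulTop x N) := by
    rw [Module.support_quotSMulTop, Module.support_eq_zeroLocus]
    refine ⟨?_, ?_⟩
    · rw [PrimeSpectrum.mem_zeroLocus]
      exact fun r hr => hPm (hann hr)
    · simpa [PrimeSpectrum.mem_zeroLocus] using hxm
  rw [Module.support_eq_zeroLocus, PrimeSpectrum.mem_zeroLocus] at hsupp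
  obtain ⟨Q, hQ, hQm⟩ := Ideal.exists_minimalPrimes_le (J := m) hsupp
  have hQN : Q ∈ associatedPrimes R (QuotSMulTop x N) :=
    Module.associatedPrimes.minimalPrimes_annihilator_subset_associatedPrimes R _ hQ
  refine ⟨Q, IsAssociatedPrime.map_of_injective _ hQN hinj, hQm, ?_⟩
  have hxQ : x ∈ Q := hQ.1.2 (QuotSMulTop.mem_annihilator _ _)
  have hxP : x ∉ P := by
    intro h
    have h1 : u = 0 := by
      apply hx
      simp only [smul_zero]
      exact (hu' x).1 h
    apply hPp.ne_top
    rw [Ideal.eq_top_iff_one, hu']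
    simp [h1]
  refine lt_of_le_of_ne ?_ (by rintro rfl; exact hxP hxQ)
  intro p hp
  apply hQ.1.2
  rw [Module.mem_annihilator]
  intro a
  induction a using Submodule.Quotient.induction_on with
  | H a =>
  rw [← Submodule.Quotient.mk_smul]
  have : p • a = 0 := Subtype.ext ((hN _).1 a.2 p hp)
  rw [this, Submodule.Quotient.mk_zero]

open RingTheory.Sequence in
theorem aux_ub {R : Type} [CommRing R] [IsNoetherianRing R] (m : Ideal R) [m.IsPrime]
    (rs : List R) : ∀ (M : Type) [AddCommGroup M] [Module R M] [Module.Finite R M] (P : Ideal R)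
    (hP : IsAssociatedPrime P M) (_ : P ≤ m) (_ : ∀ r ∈ rs, r ∈ m) (_ : IsWeaklyRegular M rs),
    (rs.length : ℕ∞) ≤ Order.coheight (⟨P, hP.1⟩ : PrimeSpectrum R) := by
  induction rs with
  | nil => intros; simp
  | cons x rs ih =>
    intro M _ _ _ P hP hPm hrs hreg
    rw [isWeaklyRegular_cons_iff] at hreg
    obtain ⟨Q, hQ, hQm, hPQ⟩ := aux_step m M P hP hPm x (hrs x (by simp)) hreg.1
    have h1 := ih (QuotSMulTop x M) Q hQ hQm (fun r hr => hrs r (by simp [hr])) hreg.2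
    have h2 : (⟨P, hP.1⟩ : PrimeSpectrum R) < ⟨Q, hQ.1⟩ := hPQ
    calc ((x :: rs).length : ℕ∞) = rs.length + 1 := by simp
      _ ≤ _ := by gcongr
      _ ≤ _ := Order.coheight_add_one_le h2

theorem aux_coheight {R : Type} [CommRing R] (P : PrimeSpectrum R) :
    (Order.coheight P : WithBot ℕ∞) ≤ ringKrullDim (R ⧸ P.asIdeal) := by
  rw [ringKrullDim_quotient, Order.coheight_eq_krullDim_Ici]
  exact le_of_eq rfl

open scoped Pointwise in
open RingTheory.Sequence in
theorem aux_ext {R : Type} [CommRing R] (rs : List R) : ∀ (A B C : Type)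
    [AddCommGroup A] [Module R A] [AddCommGroup B] [Module R B] [AddCommGroup C] [Module R C]
    (f : A →ₗ[R] B) (g : B →ₗ[R] C) (_ : Function.Injective f) (_ : Function.Surjective g)
    (_ : Function.Exact f g) (_ : IsWeaklyRegular A rs) (_ : IsWeaklyRegular C rs),
    IsWeaklyRegular B rs := by
  induction rs with
  | nil => intros; exact IsWeaklyRegular.nil _ _
  | cons x rs ih =>
    intro A B C _ _ _ _ _ _ f g hf hg hfg hA hC
    rw [isWeaklyRegular_cons_iff] at *
    refine ⟨isSMulRegular_of_range_eq_ker hf hfg.linearMap_ker_eq.symm hA.1 hC.1, ?_⟩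
    refine ih _ _ _ (QuotSMulTop.map x f) (QuotSMulTop.map x g) ?_
      (QuotSMulTop.map_surjective x hg) (QuotSMulTop.map_exact x hfg hg) hA.2 hC.2
    rw [injective_iff_map_eq_zero]
    intro a
    induction a using Submodule.Quotient.induction_on with
    | H a =>
    intro h
    rw [QuotSMulTop.map_apply_mk, Submodule.Quotient.mk_eq_zero,
      Submodule.mem_smul_pointwise_iff_exists] at h
    obtain ⟨b, -, hb⟩ := h
    rw [Submodule.Quotient.mk_eq_zero, Submodule.mem_smul_pointwise_iff_exists]
    have : g b = 0 := by
      apply hC.1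
      simp only [smul_zero]
      rw [← map_smul, hb, hfg.apply_apply_eq_zero]
    obtain ⟨a', rfl⟩ := (hfg b).1 this
    refine ⟨a', trivial, hf ?_⟩
    rw [map_smul, hb]

/-- elementwise weak regularity on R/H -/
def WR {R : Type} [CommRing R] : Ideal R → List R → Prop
  | _, [] => True
  | H, r :: rs => (∀ m, r * m ∈ H → m ∈ H) ∧ WR (H ⊔ Ideal.span {r}) rs

theorem WR_append {R : Type} [CommRing R] (as bs : List R) : ∀ (H : Ideal R),
    WR H (as ++ bs) ↔ WR H as ∧ WR (H ⊔ Ideal.ofList as) bs := by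
  induction as with
  | nil => intro H; simp [WR]
  | cons a as ih =>
    intro H
    simp only [List.cons_append, WR, ih, Ideal.ofList_cons, and_assoc, sup_assoc]

open scoped Pointwise in
open RingTheory.Sequence in
theorem WR_weak {R : Type} [CommRing R] (rs : List R) : ∀ (H : Ideal R), WR H rs →
    IsWeaklyRegular (R ⧸ H) rs := by
  induction rs with
  | nil => intros; exact IsWeaklyRegular.nil _ _
  | cons x rs ih =>
    intro H h
    rw [isWeaklyRegular_cons_iff]
    refine ⟨(isSMulRegular_quotient_iff_mem_of_smul_mem H x).2 h.1, ?_⟩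
    have e1 : x • (⊤ : Submodule R (R ⧸ H)) = Submodule.map H.mkQ (Ideal.span {x}) := by
      ext y
      rw [Submodule.mem_smul_pointwise_iff_exists]
      constructor
      · rintro ⟨b, -, rfl⟩
        obtain ⟨c, rfl⟩ := Submodule.mkQ_surjective _ b
        exact ⟨x * c, Ideal.mul_mem_right _ _ (Ideal.mem_span_singleton_self x), rfl⟩
      · rintro ⟨c, hc, rfl⟩
        obtain ⟨b, rfl⟩ := Ideal.mem_span_singleton'.1 hc
        exact ⟨H.mkQ b, trivial, by rw [← map_smul, smul_eq_mul, mul_comm]⟩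
    have e : (QuotSMulTop x (R ⧸ H)) ≃ₗ[R] (R ⧸ (H ⊔ Ideal.span {x})) :=
      (Submodule.quotEquivOfEq _ _ e1).trans
        (Submodule.quotientQuotientEquivQuotientSup H (Ideal.span {x}))
    exact (e.isWeaklyRegular_congr rs).2 (ih _ h.2)

/-- the ideal generated by the variables outside `T` -/
noncomputable def PT (K : Type) [Field K] {n : ℕ} (T : Finset (Fin n)) :
    Ideal (MvPolynomial (Fin n) K) :=
  Ideal.span ((X : Fin n → MvPolynomial (Fin n) K) '' {i | i ∉ T})

theorem mem_PT (K : Type) [Field K] {n : ℕ} (T : Finset (Fin n)) (p : MvPolynomial (Fin n) K) :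
    p ∈ PT K T ↔ ∀ m ∈ p.support, ¬ m.support ⊆ T := by
  rw [PT, mem_ideal_span_X_image]
  refine forall₂_congr fun m _ => ?_
  rw [Finset.not_subset]
  constructor
  · rintro ⟨i, h1, h2⟩; exact ⟨i, by simpa using h2, h1⟩
  · rintro ⟨i, h1, h2⟩; exact ⟨i, h2, by simpa using h1⟩

/-- kill the variables outside `T` -/
noncomputable def psiT (K : Type) [Field K] {n : ℕ} (T : Finset (Fin n)) :
    MvPolynomial (Fin n) K →ₐ[K] MvPolynomial T K :=
  aeval fun i => if h : i ∈ T then X ⟨i, h⟩ else 0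

theorem sub_psiT (K : Type) [Field K] {n : ℕ} (T : Finset (Fin n)) (p : MvPolynomial (Fin n) K) :
    p - rename Subtype.val (psiT K T p) ∈ PT K T := by
  have : (Ideal.Quotient.mkₐ K (PT K T)) =
      (Ideal.Quotient.mkₐ K (PT K T)).comp ((rename Subtype.val).comp (psiT K T)) := by
    apply MvPolynomial.algHom_ext
    intro i
    by_cases h : i ∈ T
    · simp [psiT, h]
    · simp only [psiT, AlgHom.comp_apply, aeval_X, h, dite_false, map_zero]
      exact Ideal.Quotient.eq_zero_iff_mem.2 (Ideal.subset_span ⟨i, h, rfl⟩)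
  rw [← Ideal.Quotient.eq]
  exact DFunLike.congr_fun this p

theorem PT_eq_ker (K : Type) [Field K] {n : ℕ} (T : Finset (Fin n)) :
    PT K T = RingHom.ker (psiT K T) := by
  apply le_antisymm
  · rw [PT, Ideal.span_le]
    rintro _ ⟨i, hi, rfl⟩
    have hi' : i ∉ T := hi
    simp [psiT, RingHom.mem_ker, hi']
  · intro p hp
    have := sub_psiT K T p
    rw [RingHom.mem_ker] at hp
    simpa [hp] using this

theorem PT_prime (K : Type) [Field K] {n : ℕ} (T : Finset (Fin n)) : (PT K T).IsPrime := by
  rw [PT_eq_ker]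
  exact RingHom.ker_isPrime _

theorem PT_dim (K : Type) [Field K] {n : ℕ} (T : Finset (Fin n)) :
    ringKrullDim (MvPolynomial (Fin n) K ⧸ PT K T) ≤ T.card := by
  have h : Function.Surjective ((Ideal.Quotient.mk (PT K T)).comp
      (rename (R := K) (Subtype.val : T → Fin n)).toRingHom) := by
    intro y
    obtain ⟨p, rfl⟩ := Ideal.Quotient.mk_surjective y
    exact ⟨psiT K T p, (Ideal.Quotient.eq.2 (sub_psiT K T p)).symm⟩
  refine (ringKrullDim_le_of_surjective _ h).trans ?_
  rw [MvPolynomial.ringKrullDim_of_isNoetherianRing]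
  simp

section
attribute [local instance] MvPolynomial.gradedAlgebra

/-- homogeneity -/
def HomI {K : Type} [Field K] {n : ℕ} (H : Ideal (MvPolynomial (Fin n) K)) : Prop :=
  H.IsHomogeneous (homogeneousSubmodule (Fin n) K)

theorem HomI_sup {K : Type} [Field K] {n : ℕ} (H : Ideal (MvPolynomial (Fin n) K))
    (hH : HomI H) (y : MvPolynomial (Fin n) K) (k : ℕ) (hy : y.IsHomogeneous k) :
    HomI (H ⊔ Ideal.span {y}) := by
  refine Ideal.IsHomogeneous.sup hH (Ideal.homogeneous_span _ _ ?_)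
  rintro _ rfl
  exact ⟨k, hy⟩

theorem HomI_PT {K : Type} [Field K] {n : ℕ} (T : Finset (Fin n)) : HomI (PT K T) := by
  refine Ideal.homogeneous_span _ _ ?_
  rintro _ ⟨i, -, rfl⟩
  exact ⟨1, isHomogeneous_X _ _⟩

theorem HomI_sep {K : Type} [Field K] {n : ℕ} (H : Ideal (MvPolynomial (Fin n) K))
    (hH : HomI H) (i : Fin n) (p : MvPolynomial (Fin n) K)
    (hp : ∀ N : ℕ, ∃ q, p - X i ^ N * q ∈ H) : p ∈ H := by
  rw [mem_iff_homogeneousComponent_mem hH]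
  intro j
  obtain ⟨q, hq⟩ := hp (j + 1)
  have h := homogeneousComponent_mem_of_mem hH hq j
  have h0 : homogeneousComponent j (X i ^ (j + 1) * q) = 0 := by
    ext m
    rw [coeff_homogeneousComponent, coeff_zero]
    split_ifs with hm
    · rw [mul_comm, X_pow_eq_monomial, coeff_mul_monomial', if_neg]
      intro hle
      have h1 := hle i
      have h2 := Finsupp.le_degree i m
      simp at h1
      omega
    · rfl
  rwa [map_sub, h0, sub_zero] at h

end

theorem WR_swap {K : Type} [Field K] {n : ℕ} (i : Fin n) (ys : List (MvPolynomial (Fin n) K)) :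
    ∀ (H : Ideal (MvPolynomial (Fin n) K)) (_ : HomI H)
    (_ : ∀ y ∈ ys, ∃ k, y.IsHomogeneous k), WR H (X i :: ys) → WR H (ys ++ [X i]) := by
  induction ys with
  | nil => intro H _ _ h; exact h
  | cons y ys ih =>
    rintro H hH hys ⟨hx, hy, hrest⟩
    obtain ⟨k, hk⟩ := hys y (by simp)
    have hsup := HomI_sup H hH y k hk
    have key : ∀ m, y * m ∈ H → ∃ m', y * m' ∈ H ∧ m - X i * m' ∈ H := by
      intro m hm
      have h1 := hy m (Ideal.mem_sup_left hm)
      obtain ⟨a, ha, b, hb, rfl⟩ := Submodule.mem_sup.1 h1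
      obtain ⟨c, rfl⟩ := Ideal.mem_span_singleton'.1 hb
      refine ⟨c, hx _ ?_, ?_⟩
      · have : X i * (y * c) = y * (a + c * X i) - y * a := by ring
        rw [this]
        exact H.sub_mem hm (H.mul_mem_left _ ha)
      · have : a + c * X i - X i * c = a := by ring
        rwa [this]
    refine ⟨?_, ih _ hsup (fun z hz => hys z (by simp [hz])) ⟨?_, ?_⟩⟩
    · intro m hm
      apply HomI_sep H hH i
      intro N
      have : ∃ q, y * q ∈ H ∧ m - X i ^ N * q ∈ H := by
        induction N with
        | zero => exact ⟨m, hm, by simp⟩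
        | succ N ihN =>
          obtain ⟨q, hq, hq'⟩ := ihN
          obtain ⟨q2, h1, h2⟩ := key q hq
          refine ⟨q2, h1, ?_⟩
          have : m - X i ^ (N + 1) * q2 = (m - X i ^ N * q) + X i ^ N * (q - X i * q2) := by ring
          rw [this]
          exact H.add_mem hq' (H.mul_mem_left _ h2)
      obtain ⟨q, -, h⟩ := this
      exact ⟨q, h⟩
    · intro m hm
      obtain ⟨a, ha, b, hb, hab⟩ := Submodule.mem_sup.1 hm
      obtain ⟨c, rfl⟩ := Ideal.mem_span_singleton'.1 hb
      have h1 : y * c ∈ H ⊔ Ideal.span {X i} := by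
        have : y * c = - a + m * X i := by
          have : a + c * y = X i * m := hab
          linear_combination this
        rw [this]
        exact Submodule.mem_sup.2 ⟨-a, H.neg_mem ha, m * X i,
          Ideal.mem_span_singleton'.2 ⟨m, rfl⟩, rfl⟩
      obtain ⟨a', ha', b', hb', hab'⟩ := Submodule.mem_sup.1 (hy c h1)
      obtain ⟨e, rfl⟩ := Ideal.mem_span_singleton'.1 hb'
      have h2 : m - y * e ∈ H := by
        apply hx
        have : X i * (m - y * e) = a + y * a' := by
          linear_combination (-1) * hab - y * hab'
        rw [this]
        exact H.add_mem ha (H.mul_mem_left _ ha')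
      exact Submodule.mem_sup.2 ⟨_, h2, e * y, Ideal.mem_span_singleton'.2 ⟨e, rfl⟩, by ring⟩
    · have : H ⊔ Ideal.span {y} ⊔ Ideal.span {X i} = H ⊔ Ideal.span {X i} ⊔ Ideal.span {y} := by
        rw [sup_assoc, sup_assoc, sup_comm (Ideal.span {y})]
      rw [this]
      exact hrest

/-- the sequence of elementary symmetric polynomials -/
noncomputable def eseq (K : Type) [Field K] (n t : ℕ) : List (MvPolynomial (Fin n) K) :=
  (List.range t).map fun k => esymm (Fin n) K (k + 1)

theorem esymm_hom (K : Type) [Field K] (n k : ℕ) : (esymm (Fin n) K k).IsHomogeneous k := by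
  refine IsHomogeneous.sum _ _ _ ?_
  intro t ht
  have := IsHomogeneous.prod t (fun i => (X i : MvPolynomial (Fin n) K)) (fun _ => 1)
    (fun i _ => isHomogeneous_X _ _)
  simpa [(Finset.mem_powersetCard.1 ht).2] using this

theorem esymm_sub (K : Type) [Field K] {n : ℕ} (T : Finset (Fin n)) :
    esymm (Fin n) K T.card - ∏ i ∈ T, X i ∈ PT K T := by
  rw [esymm, ← Finset.add_sum_erase (a := T) _ _ (by simp [Finset.mem_powersetCard]),
    add_sub_cancel_left]
  refine Ideal.sum_mem _ fun A hA => ?_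
  rw [Finset.mem_erase, Finset.mem_powersetCard] at hA
  obtain ⟨j, hj, hjT⟩ : ∃ j ∈ A, j ∉ T := by
    rw [← Finset.not_subset]
    intro h
    exact hA.1 (Finset.eq_of_subset_of_card_le h hA.2.2.ge)
  exact Ideal.mem_of_dvd _ (Finset.dvd_prod_of_mem _ hj) (Ideal.subset_span ⟨j, hjT, rfl⟩)

theorem PT_erase (K : Type) [Field K] {n : ℕ} (T : Finset (Fin n)) (i : Fin n) :
    PT K (T.erase i) = PT K T ⊔ Ideal.span {X i} := by
  rw [PT, PT, ← Ideal.span_union, ← Set.image_singleton, ← Set.image_union]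
  congr 2
  ext j
  simp only [Finset.mem_erase, Set.mem_ofPred_eq, Set.mem_union, Set.mem_singleton_iff]
  tauto

theorem WR_PT (K : Type) [Field K] {n : ℕ} (t : ℕ) : ∀ (T : Finset (Fin n)), T.card = t →
    WR (PT K T) (eseq K n t) := by
  induction t with
  | zero => intro T _; simp [eseq, WR]
  | succ t ih =>
    intro T hT
    have h1 : ∀ i ∈ T, WR (PT K T) (eseq K n t ++ [X i]) := by
      intro i hi
      apply WR_swap i _ _ (HomI_PT T)
      · intro y hy
        obtain ⟨k, -, rfl⟩ := List.mem_map.1 hy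
        exact ⟨k + 1, esymm_hom _ _ _⟩
      · refine ⟨?_, ?_⟩
        · intro m hm
          refine ((PT_prime K T).mem_or_mem hm).resolve_left ?_
          rw [mem_PT]
          intro h
          refine h (Finsupp.single i 1) (by simp [X]) ?_
          exact Finsupp.support_single_subset.trans (by simpa using hi)
        · rw [← PT_erase]
          exact ih _ (by rw [Finset.card_erase_of_mem hi, hT]; rfl)
    obtain ⟨i0, hi0⟩ : T.Nonempty := by rw [← Finset.card_pos]; omega
    have e1 : eseq K n (t + 1) = eseq K n t ++ [esymm (Fin n) K (t + 1)] := by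
      simp [eseq, List.range_succ]
    rw [e1, WR_append]
    refine ⟨((WR_append _ _ _).1 (h1 i0 hi0)).1, ?_, trivial⟩
    set H := PT K T ⊔ Ideal.ofList (eseq K n t)
    have h2 : ∀ i ∈ T, ∀ m, X i * m ∈ H → m ∈ H :=
      fun i hi => ((WR_append _ _ _).1 (h1 i hi)).2.1
    have h3 : ∀ A : Finset (Fin n), A ⊆ T → ∀ m, (∏ i ∈ A, X i) * m ∈ H → m ∈ H := by
      intro A
      induction A using Finset.induction_on with
      | empty => intro _ m hm; simpa using hm
      | insert a A ha ihA =>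
        intro hA m hm
        rw [Finset.prod_insert ha, mul_assoc] at hm
        exact ihA (fun x hx => hA (Finset.mem_insert_of_mem hx)) _
          (h2 a (hA (Finset.mem_insert_self _ _)) _ hm)
    intro m hm
    apply h3 T subset_rfl
    have h4 := esymm_sub K T
    rw [hT] at h4
    have : (∏ i ∈ T, X i) * m = esymm (Fin n) K (t + 1) * m
      - (esymm (Fin n) K (t + 1) - ∏ i ∈ T, X i) * m := by ring
    rw [this]
    exact H.sub_mem hm (H.mul_mem_right _ (Ideal.mem_sup_left h4))

theorem WR_PT_le (K : Type) [Field K] {n : ℕ} (d : ℕ) (T : Finset (Fin n)) (h : d ≤ T.card) :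
    WR (PT K T) (eseq K n d) := by
  have h1 := WR_PT K T.card T rfl
  have : eseq K n T.card = eseq K n d ++
      (((List.range (T.card - d)).map (d + ·)).map fun k => esymm (Fin n) K (k + 1)) := by
    rw [eseq, eseq, ← List.map_append, ← List.range_add, Nat.add_sub_cancel' h]
  rw [this, WR_append] at h1
  exact h1.1

/-- exponent vector of a squarefree monomial -/
noncomputable def eT {n : ℕ} (T : Finset (Fin n)) : Fin n →₀ ℕ := ∑ i ∈ T, Finsupp.single i 1

theorem eT_apply {n : ℕ} (T : Finset (Fin n)) (i : Fin n) : eT T i = if i ∈ T then 1 else 0 := by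
  simp [eT, Finsupp.finsetSum_apply, Finsupp.single_apply]

theorem sqMon_eq (K : Type) [Field K] {n : ℕ} (T : Finset (Fin n)) :
    sqMon K T = monomial (eT T) 1 := by
  rw [eT, monomial_sum_one]; rfl

theorem eT_le {n : ℕ} (T : Finset (Fin n)) (m : Fin n →₀ ℕ) : eT T ≤ m ↔ T ⊆ m.support := by
  constructor
  · intro h i hi
    have := h i
    rw [eT_apply, if_pos hi] at this
    rw [Finsupp.mem_support_iff]; omega
  · intro h i
    rw [eT_apply]
    split_ifs with hi
    · have := h hi
      rw [Finsupp.mem_support_iff] at this; omega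
    · omega

theorem support_add_eT {n : ℕ} (T : Finset (Fin n)) (m : Fin n →₀ ℕ) :
    (m + eT T).support = m.support ∪ T := by
  ext i
  by_cases h : i ∈ T <;> simp [eT_apply, h]

/-- the ideal generated by the square-free monomials in U -/
noncomputable def sqI (K : Type) [Field K] {n : ℕ} (U : Set (Finset (Fin n))) :
    Ideal (MvPolynomial (Fin n) K) := Ideal.span (sqMon K '' U)

theorem mem_sqI (K : Type) [Field K] {n : ℕ} (U : Set (Finset (Fin n)))
    (p : MvPolynomial (Fin n) K) :
    p ∈ sqI K U ↔ ∀ m ∈ p.support, ∃ A ∈ U, A ⊆ m.support := by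
  have : sqMon K '' U = (fun s => monomial s (1 : K)) '' (eT '' U) := by
    rw [Set.image_image]
    exact Set.image_congr fun A _ => sqMon_eq K A
  rw [sqI, this, mem_ideal_span_monomial_image]
  simp [eT_le]

theorem mem_sqI_up (K : Type) [Field K] {n : ℕ} (U : Set (Finset (Fin n))) (hU : IsUpperSet U)
    (p : MvPolynomial (Fin n) K) :
    p ∈ sqI K U ↔ ∀ m ∈ p.support, m.support ∈ U := by
  rw [mem_sqI]
  refine forall₂_congr fun m _ => ⟨?_, fun h => ⟨_, h, subset_rfl⟩⟩
  rintro ⟨A, hA, h⟩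
  exact hU h hA

theorem sqI_closure (K : Type) [Field K] {n : ℕ} (U : Set (Finset (Fin n))) :
    sqI K (upperClosure U : Set (Finset (Fin n))) = sqI K U := by
  ext p
  rw [mem_sqI_up _ _ (UpperSet.upper _), mem_sqI]
  rfl

theorem eT_support {n : ℕ} (T : Finset (Fin n)) : (eT T).support = T := by
  simpa using support_add_eT T 0

theorem sqMon_mem (K : Type) [Field K] {n : ℕ} (U : Set (Finset (Fin n))) (hU : IsUpperSet U)
    (T : Finset (Fin n)) : sqMon K T ∈ sqI K U ↔ T ∈ U := by
  classical
  rw [mem_sqI_up _ _ hU, sqMon_eq, support_monomial, if_neg one_ne_zero]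
  simp [eT_support]

theorem colon_sqI (K : Type) [Field K] {n : ℕ} (U : Set (Finset (Fin n))) (hU : IsUpperSet U)
    (T : Finset (Fin n)) (hT : T ∉ U) (hT' : ∀ j, j ∉ T → insert j T ∈ U)
    (s : MvPolynomial (Fin n) K) : s * sqMon K T ∈ sqI K U ↔ s ∈ PT K T := by
  rw [mem_sqI_up _ _ hU, mem_PT, sqMon_eq]
  constructor
  · intro h m hm hmT
    have h1 := h (m + eT T) (by
      rw [mem_support_iff, coeff_mul_monomial, mul_one]; exact mem_support_iff.1 hm)
    rw [support_add_eT, Finset.union_eq_right.2 hmT] at h1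
    exact hT h1
  · intro h m hm
    rw [mem_support_iff, coeff_mul_monomial'] at hm
    split_ifs at hm with hle
    · have h1 := h (m - eT T) (by rw [mem_support_iff]; simpa using hm)
      obtain ⟨j, hj, hjT⟩ := Finset.not_subset.1 h1
      refine hU ?_ (hT' j hjT)
      have h2 := support_add_eT T (m - eT T)
      rw [tsub_add_cancel_of_le hle] at h2
      rw [h2]
      intro i hi
      rcases Finset.mem_insert.1 hi with rfl | hi
      · exact Finset.mem_union_left _ hj
      · exact Finset.mem_union_right _ hi
    · exact absurd rfl hm

open RingTheory.Sequence in
theorem lb_aux (K : Type) [Field K] {n d : ℕ} (V : Set (Finset (Fin n))) (hV : IsUpperSet V)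
    (hVd : ∀ A ∈ V, d ≤ A.card) (k : ℕ) : ∀ (U : Set (Finset (Fin n))) (_ : IsUpperSet U)
    (_ : U ⊆ V) (_ : (V \ U).ncard = k),
    IsWeaklyRegular (idealQuot (sqI K V) (sqI K U)) (eseq K n d) := by
  induction k with
  | zero =>
    intro U hU hUV h0
    rw [Set.ncard_eq_zero (Set.toFinite _), Set.sdiff_eq_empty] at h0
    obtain rfl : U = V := Set.Subset.antisymm hUV h0
    have hs : Subsingleton (idealQuot (sqI K U) (sqI K U)) := by
      rw [Submodule.Quotient.subsingleton_iff, Submodule.comap_subtype_self]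
    rw [isWeaklyRegular_iff_Fin]
    intro i a b _
    have : Subsingleton (idealQuot (sqI K U) (sqI K U) ⧸
      (Ideal.ofList ((eseq K n d).take i) • ⊤ : Submodule (MvPolynomial (Fin n) K) (idealQuot (sqI K U) (sqI K U)))) :=
      (Submodule.mkQ_surjective (Ideal.ofList ((eseq K n d).take i) •
        (⊤ : Submodule (MvPolynomial (Fin n) K) (idealQuot (sqI K U) (sqI K U))))).subsingleton
    exact Subsingleton.elim _ _
  | succ k ih =>
    intro U hU hUV hk
    have hne : (V \ U).Nonempty := by
      rw [← Set.ncard_pos (Set.toFinite _)]; omega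
    obtain ⟨T, hTm⟩ := (Set.toFinite (V \ U)).exists_maximal hne
    have hTV : T ∈ V := hTm.1.1
    have hTU : T ∉ U := hTm.1.2
    have hgt : ∀ A, T ⊂ A → A ∈ U := by
      intro A hA
      by_contra hAU
      exact hA.2 (hTm.2 ⟨hV hA.1 hTV, hAU⟩ hA.1)
    have hins : ∀ j, j ∉ T → insert j T ∈ U := fun j hj => hgt _ (Finset.ssubset_insert hj)
    have hU' : IsUpperSet (insert T U) := by
      rintro A B hAB (rfl | hA)
      · rcases eq_or_ssubset_of_subset hAB with rfl | h
        · exact Set.mem_insert _ _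
        · exact Set.mem_insert_of_mem _ (hgt _ h)
      · exact Set.mem_insert_of_mem _ (hU hAB hA)
    have hcard : (V \ insert T U).ncard = k := by
      have : V \ insert T U = (V \ U) \ {T} := by
        ext; simp; tauto
      rw [this, Set.ncard_sdiff_singleton_of_mem hTm.1, hk]; rfl
    have hC := ih (insert T U) hU' (Set.insert_subset hTV hUV) hcard
    have hA := WR_weak _ _ (WR_PT_le K d T (hVd T hTV))
    have hTI : sqMon K T ∈ sqI K V := (sqMon_mem K V hV T).2 hTV
    have hspan : sqI K (insert T U) = Ideal.span {sqMon K T} ⊔ sqI K U := by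
      rw [sqI, Set.image_insert_eq, Ideal.span_insert]; rfl
    let u : idealQuot (sqI K V) (sqI K U) := Submodule.Quotient.mk ⟨sqMon K T, hTI⟩
    have hu : ∀ s : MvPolynomial (Fin n) K, s • u = 0 ↔ s ∈ PT K T := by
      intro s
      rw [← colon_sqI K U hU T hTU hins]
      rw [← Submodule.Quotient.mk_smul, Submodule.Quotient.mk_eq_zero]
      rfl
    let f : (MvPolynomial (Fin n) K ⧸ PT K T) →ₗ[MvPolynomial (Fin n) K]
        idealQuot (sqI K V) (sqI K U) :=
      Submodule.liftQ (PT K T) (LinearMap.toSpanSingleton _ _ u) (fun s hs => (hu s).2 hs)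
    have hle : (sqI K U) ≤ sqI K (insert T U) := hspan ▸ le_sup_right
    let g : idealQuot (sqI K V) (sqI K U) →ₗ[MvPolynomial (Fin n) K]
        idealQuot (sqI K V) (sqI K (insert T U)) :=
      Submodule.factor (Submodule.comap_mono hle)
    refine aux_ext _ _ _ _ f g ?_ ?_ ?_ hA hC
    · rw [injective_iff_map_eq_zero]
      intro a
      induction a using Submodule.Quotient.induction_on with
      | H a =>
      intro h
      rw [Submodule.Quotient.mk_eq_zero]
      exact (hu a).1 h
    · exact Submodule.factor_surjective _
    · intro y
      induction y using Submodule.Quotient.induction_on with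
      | H y =>
      have h1 : g (Submodule.Quotient.mk y) = 0 ↔ (y : MvPolynomial (Fin n) K) ∈
          sqI K (insert T U) := by
        change Submodule.Quotient.mk y = 0 ↔ _
        rw [Submodule.Quotient.mk_eq_zero]; rfl
      rw [h1, hspan, Submodule.mem_sup]
      constructor
      · rintro ⟨a, ha, b, hb, hab⟩
        obtain ⟨c, rfl⟩ := Ideal.mem_span_singleton'.1 ha
        refine ⟨Submodule.Quotient.mk c, ?_⟩
        change c • u = _
        rw [← Submodule.Quotient.mk_smul, Submodule.Quotient.eq, Submodule.mem_comap]
        have : (sqI K V).subtype (c • ⟨sqMon K T, hTI⟩ - y) = -b := by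
          simp [← hab]
        rw [this]
        exact (sqI K U).neg_mem hb
      · rintro ⟨c, hc⟩
        induction c using Submodule.Quotient.induction_on with
        | H c =>
        have hc' : c • u = Submodule.Quotient.mk y := hc
        rw [← Submodule.Quotient.mk_smul, eq_comm, Submodule.Quotient.eq,
          Submodule.mem_comap] at hc'
        exact ⟨c * sqMon K T, Ideal.mem_span_singleton'.2 ⟨c, rfl⟩, _, hc', by simp⟩

/-- Lemma 1.6. -/
theorem stmt_4 (n : ℕ) (K : Type) [Field K] (d : ℕ) (hd : 0 < d)
    (I J : Ideal (MvPolynomial (Fin n) K)) (hJ0 : J ≠ ⊥) (hJI : J < I)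
    (r : ℕ) (hr : 0 < r) (f : Fin r → Finset (Fin n)) (hfinj : Function.Injective f)
    (hfd : ∀ i, (f i).card = d)
    (hIgen : I = Ideal.span (Set.range fun i => sqMon K (f i)))
    (hJgen : GenBySqMonOfDeg K (fun k => k = d + 1) J)
    (hex : ∃ i : Fin r, ∀ T : Finset (Fin n),
      T.card = d + 1 → f i ⊆ T → sqMon K T ∈ J) :
    moduleDepth (maxGraded K n) (idealQuot I J) = (d : ℕ∞) := by
  obtain ⟨G, hG, hJ⟩ := hJgen
  obtain ⟨i, hi⟩ := hex
  let V : Set (Finset (Fin n)) := (upperClosure (Set.range f) : Set _)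
  let U : Set (Finset (Fin n)) := (upperClosure G : Set _)
  have hVup : IsUpperSet V := UpperSet.upper _
  have hUup : IsUpperSet U := UpperSet.upper _
  have hIV : I = sqI K V := by
    rw [sqI_closure, hIgen, sqI, ← Set.range_comp]; rfl
  have hJU : J = sqI K U := by
    rw [sqI_closure, hJ, sqI]
  have hle := hJI.le
  clear hIgen hJ
  subst hIV
  subst hJU
  have hUV : U ⊆ V := fun A hA => (sqMon_mem K V hVup A).1 (hle ((sqMon_mem K U hUup A).2 hA))
  have hVd : ∀ A ∈ V, d ≤ A.card := by
    rintro A ⟨_, ⟨j, rfl⟩, h⟩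
    exact (hfd j).symm.le.trans (Finset.card_le_card h)
  have hTV : f i ∈ V := subset_upperClosure ⟨i, rfl⟩
  have hTU : f i ∉ U := by
    rintro ⟨A, hA, h⟩
    have h1 := Finset.card_le_card h
    have h2 := hG A hA
    have h3 := hfd i
    simp only at h2
    omega
  have hins : ∀ j, j ∉ f i → insert j (f i) ∈ U := by
    intro j hj
    rw [← sqMon_mem K U hUup]
    exact hi _ (by rw [Finset.card_insert_of_notMem hj, hfd]) (Finset.subset_insert _ _)
  have hTI : sqMon K (f i) ∈ sqI K V := (sqMon_mem K V hVup _).2 hTV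
  let u : idealQuot (sqI K V) (sqI K U) := Submodule.Quotient.mk ⟨sqMon K (f i), hTI⟩
  have hu : ∀ s : MvPolynomial (Fin n) K, s • u = 0 ↔ s ∈ PT K (f i) := by
    intro s
    rw [← colon_sqI K U hUup _ hTU hins]
    rw [← Submodule.Quotient.mk_smul, Submodule.Quotient.mk_eq_zero]
    rfl
  have hmax : maxGraded K n = PT K ∅ := by
    rw [maxGraded, PT, ← Set.image_univ]; congr 2; ext; simp
  have hprime : (maxGraded K n).IsPrime := hmax ▸ PT_prime K ∅
  have hPm : PT K (f i) ≤ maxGraded K n := by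
    rw [maxGraded, PT]; exact Ideal.span_mono (Set.image_subset_range _ _)
  have hass : IsAssociatedPrime (PT K (f i)) (idealQuot (sqI K V) (sqI K U)) := by
    rw [isAssociatedPrime_iff]
    refine ⟨PT_prime K _, u, ?_⟩
    ext s
    rw [Submodule.mem_colon_singleton, Submodule.mem_bot, hu]
  apply le_antisymm
  · apply sSup_le
    rintro k ⟨rs, rfl, hrs, hreg⟩
    have h1 := aux_ub (maxGraded K n) rs _ _ hass hPm hrs hreg.1
    have h2 := aux_coheight (⟨PT K (f i), hass.1⟩ : PrimeSpectrum (MvPolynomial (Fin n) K))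
    have h3 := h2.trans (PT_dim K (f i))
    rw [hfd] at h3
    exact h1.trans (by exact_mod_cast h3)
  · apply le_sSup
    have hmem : ∀ y ∈ eseq K n d, y ∈ maxGraded K n := by
      intro y hy
      obtain ⟨k, -, rfl⟩ := List.mem_map.1 hy
      refine Ideal.sum_mem _ fun A hA => ?_
      obtain ⟨j, hj⟩ : A.Nonempty := by
        rw [← Finset.card_pos, (Finset.mem_powersetCard.1 hA).2]; omega
      exact Ideal.mem_of_dvd _ (Finset.dvd_prod_of_mem _ hj) (Ideal.subset_span ⟨j, rfl⟩)
    refine ⟨eseq K n d, by simp [eseq], hmem,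
      ⟨lb_aux K V hVup hVd _ U hUup hUV rfl, ?_⟩⟩
    intro htop
    obtain ⟨a, ha, hau⟩ := Submodule.exists_sub_one_mem_and_smul_eq_zero_of_fg_of_le_smul
      (Ideal.ofList (eseq K n d)) (⊤ : Submodule _ (idealQuot (sqI K V) (sqI K U)))
      (Module.Finite.fg_top) htop.le
    have h1 : a ∈ maxGraded K n := hPm ((hu a).1 (hau u trivial))
    have h2 : a - 1 ∈ maxGraded K n := (Ideal.span_le.2 hmem) ha
    apply hprime.ne_top
    rw [Ideal.eq_top_iff_one]
    have := Ideal.sub_mem _ h1 h2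
    simpa using this
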